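/- arXiv:math/0209190 — 6 statements merged into one kernel-verified Lean document; each statement's English description precedes it below -/
import Mathlib

section
/- For all real numbers t₁ < t₂ one has arccos(tanh t₂) > (1 − (t₂ − t₁)) · arccos(tanh t₁). -/
/-!
The angle `φ t = arccos (tanh t)` satisfies `φ' = -sin φ`, and `φ > 0` gives `sin φ < φ`, so
`φ' > -φ`. Hence `exp t * φ t` is strictly increasing, i.e. `φ` decays more slowly than `exp (-t)`,
and `1 - s ≤ exp (-s)` turns the exponential bound into a linear one.
-/

open Real Set

section ExponentialDecay

variable {D : Set ℝ} {c : ℝ} {f f' : ℝ → ℝ}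

theorem strictMonoOn_exp_mul_of_neg_mul_lt_hasDerivWithinAt (hD : Convex ℝ D)
    (hf : ContinuousOn f D)
    (hf' : ∀ t ∈ interior D, HasDerivWithinAt f (f' t) (interior D) t)
    (hlt : ∀ t ∈ interior D, -(c * f t) < f' t) :
    StrictMonoOn (fun t ↦ exp (c * t) * f t) D := by
  refine strictMonoOn_of_hasDerivWithinAt_pos (f' := fun t ↦ exp (c * t) * (c * f t + f' t)) hD
    (by fun_prop) (fun t ht ↦ ?_) (fun t ht ↦ ?_)
  · have hexp : HasDerivAt (fun s ↦ exp (c * s)) (exp (c * t) * c) t := by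
      simpa only [mul_one] using ((hasDerivAt_id' t).const_mul c).exp
    exact (hexp.hasDerivWithinAt.fun_mul (hf' t ht)).congr_deriv (by ring)
  · exact mul_pos (exp_pos _) (by linarith [hlt t ht])

theorem exp_neg_mul_sub_mul_lt_of_neg_mul_lt_hasDerivWithinAt (hD : Convex ℝ D)
    (hf : ContinuousOn f D)
    (hf' : ∀ t ∈ interior D, HasDerivWithinAt f (f' t) (interior D) t)
    (hlt : ∀ t ∈ interior D, -(c * f t) < f' t)
    {a b : ℝ} (ha : a ∈ D) (hb : b ∈ D) (hab : a < b) :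
    exp (-(c * (b - a))) * f a < f b := by
  have hmono : exp (c * a) * f a < exp (c * b) * f b :=
    strictMonoOn_exp_mul_of_neg_mul_lt_hasDerivWithinAt hD hf hf' hlt ha hb hab
  refine lt_of_mul_lt_mul_left ?_ (exp_pos (c * b)).le
  calc exp (c * b) * (exp (-(c * (b - a))) * f a)
      = exp (c * a) * f a := by rw [← mul_assoc, ← exp_add]; ring_nf
    _ < exp (c * b) * f b := hmono

end ExponentialDecay

theorem hasDerivAt_tanh (t : ℝ) : HasDerivAt tanh (1 - tanh t ^ 2) t := by
  have hcosh : cosh t ≠ 0 := (cosh_pos t).ne'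
  rw [funext tanh_eq_sinh_div_cosh]
  exact ((hasDerivAt_sinh t).fun_div (hasDerivAt_cosh t) hcosh).congr_deriv (by field_simp)

theorem hasDerivAt_arccos_tanh (t : ℝ) :
    HasDerivAt (fun s ↦ arccos (tanh s)) (-sin (arccos (tanh t))) t := by
  have harccos := hasDerivAt_arccos (neg_one_lt_tanh t).ne' (tanh_lt_one t).ne
  refine (harccos.comp t (hasDerivAt_tanh t)).congr_deriv ?_
  rw [sin_arccos, neg_mul, one_div_mul_eq_div, div_sqrt]

theorem arccos_tanh_pos (t : ℝ) : 0 < arccos (tanh t) :=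
  arccos_pos.2 (tanh_lt_one t)

theorem exp_neg_sub_mul_arccos_tanh_lt {t₁ t₂ : ℝ} (h : t₁ < t₂) :
    exp (-(t₂ - t₁)) * arccos (tanh t₁) < arccos (tanh t₂) := by
  have hlt (t : ℝ) : -(1 * arccos (tanh t)) < -sin (arccos (tanh t)) := by
    simpa only [one_mul, neg_lt_neg_iff] using sin_lt (arccos_tanh_pos t)
  simpa only [one_mul] using exp_neg_mul_sub_mul_lt_of_neg_mul_lt_hasDerivWithinAt convex_univ
    (fun t _ ↦ (hasDerivAt_arccos_tanh t).continuousAt.continuousWithinAt)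
    (fun t _ ↦ (hasDerivAt_arccos_tanh t).hasDerivWithinAt) (fun t _ ↦ hlt t)
    (mem_univ t₁) (mem_univ t₂) h

theorem stmt1 (t₁ t₂ : ℝ) (h : t₁ < t₂) :
    Real.arccos (Real.tanh t₂) > (1 - (t₂ - t₁)) * Real.arccos (Real.tanh t₁) := by
  calc (1 - (t₂ - t₁)) * arccos (tanh t₁)
      ≤ exp (-(t₂ - t₁)) * arccos (tanh t₁) :=
        mul_le_mul_of_nonneg_right (one_sub_le_exp_neg _) (arccos_nonneg _)
    _ < arccos (tanh t₂) := exp_neg_sub_mul_arccos_tanh_lt h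
end

section
/- Let k ∈ ℕ and let φ, ε : ℕ → ℝ be sequences with φ i ≥ 0 and ε i ≥ 0 for all i, and with ∑_{i=1}^{k} ε i ≤ 1. Let v : ℕ → ℝ satisfy v 0 ≥ φ 0 and, for every r with 1 ≤ r ≤ k, v r ≥ φ r + (1 − ε r) · v (r−1). Then v k ≥ (1 − ∑_{i=1}^{k} ε i) · (∑_{i=0}^{k} φ i). -/
/-!
Each step of the recursion multiplies the bound already accumulated by `1 - ε r ∈ [0, 1]` and adds
`φ r`. Charging every `φ i` the full product `∏ (1 - ε j)`, rather than only the factors with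
`j > i`, gives `v k ≥ ∏ (1 - ε j) * ∑ φ i`, and Weierstrass's product inequality bounds the product
below by `1 - ∑ ε j`.
-/

open Finset

section

variable {R : Type*}

theorem one_sub_sum_le_prod_one_sub {ι : Type*} [CommRing R] [PartialOrder R] [IsOrderedRing R]
    {s : Finset ι} {f : ι → R} (hf0 : ∀ i ∈ s, 0 ≤ f i) (hf1 : ∀ i ∈ s, f i ≤ 1) :
    1 - ∑ i ∈ s, f i ≤ ∏ i ∈ s, (1 - f i) := by
  induction s using Finset.cons_induction with
  | empty => simp
  | cons a s ha ih =>
    rw [forall_mem_cons] at hf0 hf1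
    have hprod : ∏ i ∈ s, (1 - f i) ≤ 1 :=
      prod_le_one (fun i hi ↦ sub_nonneg.2 (hf1.2 i hi)) fun i hi ↦ sub_le_self 1 (hf0.2 i hi)
    rw [sum_cons, prod_cons]
    calc 1 - (f a + ∑ i ∈ s, f i)
      _ = (1 - ∑ i ∈ s, f i) - f a := by ring
      _ ≤ ∏ i ∈ s, (1 - f i) - f a * ∏ i ∈ s, (1 - f i) :=
        sub_le_sub (ih hf0.2 hf1.2) (mul_le_of_le_one_right hf0.1 hprod)
      _ = (1 - f a) * ∏ i ∈ s, (1 - f i) := by ring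

theorem prod_mul_sum_le_of_add_mul_le [CommSemiring R] [PartialOrder R] [IsOrderedRing R]
    {k : ℕ} {φ a v : ℕ → R} (hφ : ∀ i ∈ Icc 1 k, 0 ≤ φ i) (ha0 : ∀ i ∈ Icc 1 k, 0 ≤ a i)
    (ha1 : ∀ i ∈ Icc 1 k, a i ≤ 1) (hv0 : φ 0 ≤ v 0)
    (hrec : ∀ r < k, φ (r + 1) + a (r + 1) * v r ≤ v (r + 1)) :
    (∏ i ∈ Icc 1 k, a i) * ∑ i ∈ range (k + 1), φ i ≤ v k := by
  induction k with
  | zero => simpa using hv0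
  | succ k ih =>
    have hlast : k + 1 ∈ Icc 1 (k + 1) := right_mem_Icc.2 k.succ_pos
    have hsub : Icc 1 k ⊆ Icc 1 (k + 1) := Icc_subset_Icc_right k.le_succ
    have hk : (∏ i ∈ Icc 1 k, a i) * ∑ i ∈ range (k + 1), φ i ≤ v k :=
      ih (fun i hi ↦ hφ i (hsub hi)) (fun i hi ↦ ha0 i (hsub hi)) (fun i hi ↦ ha1 i (hsub hi))
        fun r hr ↦ hrec r (hr.trans k.lt_succ_self)
    calc (∏ i ∈ Icc 1 (k + 1), a i) * ∑ i ∈ range (k + 1 + 1), φ i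
      _ = (∏ i ∈ Icc 1 (k + 1), a i) * φ (k + 1) +
            a (k + 1) * ((∏ i ∈ Icc 1 k, a i) * ∑ i ∈ range (k + 1), φ i) := by
        rw [sum_range_succ _ (k + 1), prod_Icc_succ_top k.succ_pos]
        ring
      _ ≤ φ (k + 1) + a (k + 1) * v k :=
        add_le_add (mul_le_of_le_one_left (hφ _ hlast) (prod_le_one ha0 ha1))
          (mul_le_mul_of_nonneg_left hk (ha0 _ hlast))
      _ ≤ v (k + 1) := hrec k k.lt_succ_self

theorem stmt2_general [CommRing R] [PartialOrder R] [IsOrderedRing R]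
    {k : ℕ} {φ ε v : ℕ → R} (hφ : ∀ i ≤ k, 0 ≤ φ i) (hε0 : ∀ i ∈ Icc 1 k, 0 ≤ ε i)
    (hε1 : ∀ i ∈ Icc 1 k, ε i ≤ 1) (hv0 : φ 0 ≤ v 0)
    (hrec : ∀ r < k, φ (r + 1) + (1 - ε (r + 1)) * v r ≤ v (r + 1)) :
    (1 - ∑ i ∈ Icc 1 k, ε i) * ∑ i ∈ range (k + 1), φ i ≤ v k := by
  have hsum : 0 ≤ ∑ i ∈ range (k + 1), φ i :=
    sum_nonneg fun i hi ↦ hφ i (mem_range_succ_iff.1 hi)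
  calc (1 - ∑ i ∈ Icc 1 k, ε i) * ∑ i ∈ range (k + 1), φ i
    _ ≤ (∏ i ∈ Icc 1 k, (1 - ε i)) * ∑ i ∈ range (k + 1), φ i :=
      mul_le_mul_of_nonneg_right (one_sub_sum_le_prod_one_sub hε0 hε1) hsum
    _ ≤ v k :=
      prod_mul_sum_le_of_add_mul_le (fun i hi ↦ hφ i (mem_Icc.1 hi).2)
        (fun i hi ↦ sub_nonneg.2 (hε1 i hi)) (fun i hi ↦ sub_le_self 1 (hε0 i hi)) hv0 hrec

end

theorem stmt2 (k : ℕ) (φ ε v : ℕ → ℝ)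
    (hφ : ∀ i, 0 ≤ φ i) (hε : ∀ i, 0 ≤ ε i)
    (hεsum : ∑ i ∈ Finset.Icc 1 k, ε i ≤ 1)
    (hv0 : v 0 ≥ φ 0)
    (hrec : ∀ r, 1 ≤ r → r ≤ k → v r ≥ φ r + (1 - ε r) * v (r - 1)) :
    v k ≥ (1 - ∑ i ∈ Finset.Icc 1 k, ε i) * ∑ i ∈ Finset.range (k + 1), φ i :=
  stmt2_general (fun i _ ↦ hφ i) (fun i _ ↦ hε i)
    (fun _ hi ↦ (single_le_sum (fun j _ ↦ hε j) hi).trans hεsum) hv0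
    fun r hr ↦ hrec (r + 1) r.succ_pos hr
end

section
/- Let L > 0 and let v : ℝ → ℝ be differentiable on [0, L] with 0 ≤ v t ≤ π/2 for all t ∈ [0, L], and suppose deriv v t ≤ −sin (v t) for all t ∈ [0, L]. Then v L ≤ 2 · v 0 / (2 + L). -/
/-!
Solutions of `v' ≤ -g(v)` cannot cross a level `c` with `g c > 0` upwards. Applied at the level
`π / 2` this keeps `v` below `π / 2`; applied, backwards from time `L`, at levels just below
`v L > 0` it shows that `v` was never below `v L`. Hence `v' ≤ -sin (v L)` throughout, which
integrates to `L * sin (v L) ≤ v 0 - v L`, and `x / 2 ≤ sin x` on `[0, π / 2]` turns this into the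
stated bound. If `v L ≤ 0` there is nothing to prove.
-/

open Set

theorem half_le_sin {x : ℝ} (hx₀ : 0 ≤ x) (hx : x ≤ Real.pi / 2) : x / 2 ≤ Real.sin x := by
  have half_le : (1 / 2 : ℝ) ≤ 2 / Real.pi := by
    rw [div_le_div_iff₀ two_pos Real.pi_pos]
    linarith [Real.pi_le_four]
  calc
    x / 2 = 1 / 2 * x := by ring
    _ ≤ 2 / Real.pi * x := by gcongr
    _ ≤ Real.sin x := Real.mul_le_sin hx₀ hx

section DifferentialInequality

variable {v v' g : ℝ → ℝ} {a b c d M t : ℝ}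

theorem le_of_deriv_right_le_neg_comp (hv : ContinuousOn v (Icc a b))
    (hv' : ∀ t ∈ Ico a b, HasDerivWithinAt v (v' t) (Ici t) t)
    (hle : ∀ t ∈ Ico a b, v' t ≤ -g (v t)) (hc : 0 < g c) (ha : v a ≤ c) (ht : t ∈ Icc a b) :
    v t ≤ c := by
  refine image_le_of_deriv_right_lt_deriv_boundary hv hv' ha
    (fun s => hasDerivAt_const s c) (fun s hs hsc => ?_) ht
  have := hle s hs
  rw [hsc] at this
  linarith

theorem right_le_of_deriv_right_le_neg_comp (hv : ContinuousOn v (Icc a b))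
    (hv' : ∀ t ∈ Ico a b, HasDerivWithinAt v (v' t) (Ici t) t)
    (hle : ∀ t ∈ Ico a b, v' t ≤ -g (v t)) (hd : d < v b) (hg : ∀ x ∈ Ioo d (v b), 0 < g x)
    (ht : t ∈ Icc a b) : v b ≤ v t := by
  by_contra! hlt
  obtain ⟨c, hmax, hcb⟩ := exists_between (max_lt hd hlt)
  obtain ⟨hdc, htc⟩ := max_lt_iff.1 hmax
  have hsub : Ico t b ⊆ Ico a b := Ico_subset_Ico_left ht.1
  have hbc : v b ≤ c :=
    le_of_deriv_right_le_neg_comp (hv.mono (Icc_subset_Icc_left ht.1))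
      (fun s hs => hv' s (hsub hs)) (fun s hs => hle s (hsub hs)) (hg c ⟨hdc, hcb⟩) htc.le
      (right_mem_Icc.2 ht.2)
  exact hcb.not_ge hbc

theorem image_sub_le_mul_sub_of_deriv_right_le (hab : a ≤ b) (hv : ContinuousOn v (Icc a b))
    (hv' : ∀ t ∈ Ico a b, HasDerivWithinAt v (v' t) (Ici t) t)
    (hle : ∀ t ∈ Ico a b, v' t ≤ c) : v b - v a ≤ c * (b - a) := by
  have hline : ∀ s, HasDerivAt (fun s => v a + c * (s - a)) c s := fun s => by
    simpa using (((hasDerivAt_id s).sub_const a).const_mul c).const_add (v a)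
  have hb : v b ≤ v a + c * (b - a) :=
    image_le_of_deriv_right_le_deriv_boundary hv hv' (by simp)
      (fun s _ => (hline s).continuousAt.continuousWithinAt)
      (fun s _ => (hline s).hasDerivWithinAt) hle (right_mem_Icc.2 hab)
  linarith

theorem mul_comp_right_le_sub_of_deriv_right_le_neg_comp (hab : a ≤ b)
    (hv : ContinuousOn v (Icc a b))
    (hv' : ∀ t ∈ Ico a b, HasDerivWithinAt v (v' t) (Ici t) t)
    (hle : ∀ t ∈ Ico a b, v' t ≤ -g (v t)) (hdM : d < M) (hpos : ∀ x ∈ Ioc d M, 0 < g x)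
    (hmono : MonotoneOn g (Ioc d M)) (ha : v a ≤ M) (hb : d < v b) :
    (b - a) * g (v b) ≤ v a - v b := by
  have hM : ∀ t ∈ Icc a b, v t ≤ M := fun t ht =>
    le_of_deriv_right_le_neg_comp hv hv' hle (hpos M (right_mem_Ioc.2 hdM)) ha ht
  have hbM : v b ≤ M := hM b (right_mem_Icc.2 hab)
  have hright : ∀ t ∈ Icc a b, v b ≤ v t := fun t ht =>
    right_le_of_deriv_right_le_neg_comp hv hv' hle hb
      (fun x hx => hpos x ⟨hx.1, hx.2.le.trans hbM⟩) ht
  have hslope : ∀ t ∈ Ico a b, v' t ≤ -g (v b) := fun t ht => by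
    have htI := Ico_subset_Icc_self ht
    have hbt := hright t htI
    exact (hle t ht).trans
      (neg_le_neg (hmono ⟨hb, hbM⟩ ⟨hb.trans_le hbt, hM t htI⟩ hbt))
  linarith [image_sub_le_mul_sub_of_deriv_right_le hab hv hv' hslope]

end DifferentialInequality

theorem stmt4_general {L : ℝ} (hL : 0 ≤ L) {v v' : ℝ → ℝ} (hv : ContinuousOn v (Icc 0 L))
    (hv' : ∀ t ∈ Ico 0 L, HasDerivWithinAt v (v' t) (Ici t) t)
    (hle : ∀ t ∈ Ico 0 L, v' t ≤ -Real.sin (v t))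
    (h₀ : 0 ≤ v 0) (hpi : v 0 ≤ Real.pi / 2) :
    v L ≤ 2 * v 0 / (2 + L) := by
  rcases le_or_gt (v L) 0 with hvL | hvL
  · exact hvL.trans (by positivity)
  have hpos : ∀ x ∈ Ioc 0 (Real.pi / 2), 0 < Real.sin x := fun x hx =>
    Real.sin_pos_of_pos_of_lt_pi hx.1 (by linarith [hx.2, Real.pi_pos])
  have hmono : MonotoneOn Real.sin (Ioc 0 (Real.pi / 2)) :=
    Real.strictMonoOn_sin.monotoneOn.mono fun x hx => ⟨by linarith [hx.1, Real.pi_pos], hx.2⟩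
  have hdrop : L * Real.sin (v L) ≤ v 0 - v L := by
    simpa only [sub_zero] using mul_comp_right_le_sub_of_deriv_right_le_neg_comp hL hv hv' hle
      Real.pi_div_two_pos hpos hmono hpi hvL
  have hvL_pi : v L ≤ Real.pi / 2 :=
    le_of_deriv_right_le_neg_comp hv hv' hle (by simp) hpi (right_mem_Icc.2 hL)
  have hhalf : L * (v L / 2) ≤ v 0 - v L :=
    (mul_le_mul_of_nonneg_left (half_le_sin hvL.le hvL_pi) hL).trans hdrop
  rw [le_div_iff₀ (by linarith)]
  linarith

theorem stmt4 (L : ℝ) (hL : 0 < L) (v : ℝ → ℝ)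
    (hdiff : ∀ t ∈ Set.Icc (0 : ℝ) L, DifferentiableAt ℝ v t)
    (hrange : ∀ t ∈ Set.Icc (0 : ℝ) L, 0 ≤ v t ∧ v t ≤ Real.pi / 2)
    (hderiv : ∀ t ∈ Set.Icc (0 : ℝ) L, deriv v t ≤ -Real.sin (v t)) :
    v L ≤ 2 * v 0 / (2 + L) :=
  have ⟨h₀, hpi⟩ := hrange 0 (left_mem_Icc.2 hL.le)
  stmt4_general hL.le (fun t ht => (hdiff t ht).continuousAt.continuousWithinAt)
    (fun t ht => (hdiff t (Ico_subset_Icc_self ht)).hasDerivAt.hasDerivWithinAt)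
    (fun t ht => hderiv t (Ico_subset_Icc_self ht)) h₀ hpi
end

section
/- Fix a, b > 0. Then there exist constants C > 0 and θ₀ > 0 such that for every θ ∈ (0, θ₀] and all real numbers lα > 0, lβ > 0, d ≥ 0 satisfying cos(a·θ/2) = cosh(lβ/2) · tanh(lα/2), cos(b·θ/2) = cosh(lα/2) · tanh(lβ/2), and cosh d · sinh(lα/2) · sinh(lβ/2) = 1, one has d ≤ C · θ. -/
/-!
Multiplying the two angle equations turns their right-hand sides into
`sinh (lα / 2) * sinh (lβ / 2)`, so the distance equation becomes
`cosh d * cos (a * θ / 2) * cos (b * θ / 2) = 1`. For small `θ` the addition formula bounds the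
product of cosines from below by `cos ((a + b) * θ / 2)`, and comparing the quadratic Taylor bounds
`1 + x ^ 2 / 2 ≤ cosh x` and `1 - y ^ 2 / 2 ≤ cos y` then makes `d` linear in `θ`.
-/

open Real

theorem one_add_sq_div_two_le_cosh (x : ℝ) : 1 + x ^ 2 / 2 ≤ cosh x := by
  have half_sq_le : (x / 2) ^ 2 ≤ sinh (x / 2) ^ 2 := by
    rw [sq_le_sq, abs_sinh]
    exact self_le_sinh_iff.2 (abs_nonneg _)
  calc
    1 + x ^ 2 / 2 = 1 + 2 * (x / 2) ^ 2 := by ring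
    _ ≤ 1 + 2 * sinh (x / 2) ^ 2 := by gcongr
    _ = cosh (2 * (x / 2)) := by rw [cosh_two_mul, cosh_sq]; ring
    _ = cosh x := by rw [mul_div_cancel₀ x two_ne_zero]

theorem cosh_mul_tanh_mul_cosh_mul_tanh (x y : ℝ) :
    cosh y * tanh x * (cosh x * tanh y) = sinh x * sinh y := by
  have hx : cosh x ≠ 0 := (cosh_pos x).ne'
  have hy : cosh y ≠ 0 := (cosh_pos y).ne'
  rw [tanh_eq_sinh_div_cosh, tanh_eq_sinh_div_cosh]
  field_simp

theorem cos_add_le_cos_mul_cos {x y : ℝ} (hx : x ∈ Set.Icc 0 π) (hy : y ∈ Set.Icc 0 π) :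
    cos (x + y) ≤ cos x * cos y := by
  rw [cos_add]
  exact sub_le_self _ (mul_nonneg (sin_nonneg_of_mem_Icc hx) (sin_nonneg_of_mem_Icc hy))

theorem sq_le_two_mul_sq_of_cosh_mul_cos_le_one {x y : ℝ} (hy : |y| ≤ 1)
    (h : cosh x * cos y ≤ 1) : x ^ 2 ≤ 2 * y ^ 2 := by
  have hy_sq : y ^ 2 ≤ 1 := (sq_le_one_iff_abs_le_one y).2 hy
  have taylor : (1 + x ^ 2 / 2) * (1 - y ^ 2 / 2) ≤ 1 :=
    calc
      (1 + x ^ 2 / 2) * (1 - y ^ 2 / 2) ≤ cosh x * cos y :=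
        mul_le_mul (one_add_sq_div_two_le_cosh x) one_sub_sq_div_two_le_cos
          (by linarith) (cosh_pos x).le
      _ ≤ 1 := h
  nlinarith [mul_nonneg (sq_nonneg x) (sub_nonneg.2 hy_sq)]

theorem abs_le_two_mul_add_of_cosh_mul_cos_mul_cos_le_one {d x y : ℝ} (hx : 0 ≤ x) (hy : 0 ≤ y)
    (hxy : x + y ≤ 1) (h : cosh d * (cos x * cos y) ≤ 1) : |d| ≤ 2 * (x + y) := by
  have one_le_pi : 1 ≤ π := by linarith [pi_gt_three]
  have cosh_mul_cos_add_le : cosh d * cos (x + y) ≤ 1 :=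
    calc
      cosh d * cos (x + y) ≤ cosh d * (cos x * cos y) :=
        mul_le_mul_of_nonneg_left
          (cos_add_le_cos_mul_cos ⟨hx, by linarith⟩ ⟨hy, by linarith⟩) (cosh_pos d).le
      _ ≤ 1 := h
  have d_sq_le : d ^ 2 ≤ 2 * (x + y) ^ 2 :=
    sq_le_two_mul_sq_of_cosh_mul_cos_le_one (by rwa [abs_of_nonneg (add_nonneg hx hy)])
      cosh_mul_cos_add_le
  refine abs_le_of_sq_le_sq ?_ (by positivity)
  linarith [sq_nonneg (x + y), mul_pow 2 (x + y) 2]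

theorem stmt5 (a b : ℝ) (ha : 0 < a) (hb : 0 < b) :
    ∃ C > (0 : ℝ), ∃ θ₀ > (0 : ℝ), ∀ θ ∈ Set.Ioc (0 : ℝ) θ₀,
      ∀ lα lβ d : ℝ, 0 < lα → 0 < lβ → 0 ≤ d →
        Real.cos (a * θ / 2) = Real.cosh (lβ / 2) * Real.tanh (lα / 2) →
        Real.cos (b * θ / 2) = Real.cosh (lα / 2) * Real.tanh (lβ / 2) →
        Real.cosh d * Real.sinh (lα / 2) * Real.sinh (lβ / 2) = 1 →
        d ≤ C * θ := by
  refine ⟨a + b, by positivity, 2 / (a + b), by positivity, ?_⟩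
  rintro θ ⟨hθ, hθ_le⟩ lα lβ d - - - hα hβ hd
  have sum_le_one : a * θ / 2 + b * θ / 2 ≤ 1 := by
    rw [le_div_iff₀ (by positivity)] at hθ_le
    linarith
  have cosh_mul_cos_mul_cos : cosh d * (cos (a * θ / 2) * cos (b * θ / 2)) = 1 := by
    rw [hα, hβ, cosh_mul_tanh_mul_cosh_mul_tanh, ← mul_assoc, hd]
  calc
    d ≤ |d| := le_abs_self d
    _ ≤ 2 * (a * θ / 2 + b * θ / 2) :=
      abs_le_two_mul_add_of_cosh_mul_cos_mul_cos_le_one (by positivity) (by positivity)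
        sum_le_one cosh_mul_cos_mul_cos.le
    _ = (a + b) * θ := by ring
end

section
/- There exists a constant C > 0 such that for every ε ∈ (0, 1/2] and all real numbers x > 0, h ≥ 0, φ ∈ [0, π/2] with h ≤ ε, tanh x ≤ sinh h, and sin φ · sinh x = sinh h, one has φ ≥ π/2 − C · ε. -/
/-!
The relation `tanh x ≤ sinh h = sin φ * sinh x` gives `1 / cosh x ≤ sin φ`, hence
`cos φ ≤ tanh x ≤ sinh h` because `tanh x ^ 2 + (1 / cosh x) ^ 2 = 1`. By convexity `sinh` lies
below its chord over `[0, arsinh 1]`, while `cos φ ≤ 1` covers larger arguments, so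
`cos φ ≤ h / arsinh 1` for every `h`. Jordan's inequality `1 - 2 / π * φ ≤ cos φ` turns this into
the linear lower bound for `φ`.
-/

open Real Set

lemma convexOn_sinh_Ici : ConvexOn ℝ (Ici 0) sinh := by
  refine MonotoneOn.convexOn_of_deriv (convex_Ici 0) continuous_sinh.continuousOn
    differentiable_sinh.differentiableOn ?_
  rw [Real.deriv_sinh]
  exact cosh_strictMonoOn.monotoneOn.mono interior_subset

lemma sinh_div_self_monotoneOn : MonotoneOn (fun x ↦ sinh x / x) (Ioi 0) := by
  intro x (hx : 0 < x) y (hy : 0 < y) hxy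
  simpa only [sinh_zero, sub_zero] using
    convexOn_sinh_Ici.secant_mono self_mem_Ici hx.le hy.le hx.ne' hy.ne' hxy

lemma min_sinh_le_div_mul_sinh {x y : ℝ} (hx : 0 < x) (hy : 0 < y) :
    min (sinh x) (sinh y) ≤ x / y * sinh y := by
  rcases le_total x y with hxy | hyx
  · calc
      min (sinh x) (sinh y) ≤ sinh x := min_le_left _ _
      _ = x * (sinh x / x) := (mul_div_cancel₀ _ hx.ne').symm
      _ ≤ x * (sinh y / y) :=
        mul_le_mul_of_nonneg_left (sinh_div_self_monotoneOn hx hy hxy) hx.le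
      _ = x / y * sinh y := by ring
  · calc
      min (sinh x) (sinh y) ≤ sinh y := min_le_right _ _
      _ ≤ x / y * sinh y :=
        le_mul_of_one_le_left (sinh_pos_iff.2 hy).le ((one_le_div hy).2 hyx)

lemma one_le_mul_cosh_of_tanh_le_mul_sinh {x s : ℝ} (hx : 0 < x) (h : tanh x ≤ s * sinh x) :
    1 ≤ s * cosh x := by
  rw [tanh_eq_sinh_div_cosh, div_le_iff₀ (cosh_pos x)] at h
  refine le_of_mul_le_mul_right ?_ (sinh_pos_iff.2 hx)
  linarith

lemma cos_le_tanh_of_one_le_sin_mul_cosh {x φ : ℝ} (hx : 0 ≤ x) (h : 1 ≤ sin φ * cosh x) :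
    cos φ ≤ tanh x := by
  rw [tanh_eq_sinh_div_cosh, le_div_iff₀ (cosh_pos x)]
  refine le_of_sq_le_sq ?_ (sinh_nonneg_iff.2 hx)
  calc
    (cos φ * cosh x) ^ 2 = cosh x ^ 2 - (sin φ * cosh x) ^ 2 := by
      rw [mul_pow, cos_sq']; ring
    _ ≤ cosh x ^ 2 - 1 := sub_le_sub_left (one_le_pow₀ h) _
    _ = sinh x ^ 2 := (sinh_sq x).symm

lemma pi_div_two_sub_le_of_cos_le {φ t : ℝ} (hφ : 0 ≤ φ) (ht : 0 ≤ t) (h : cos φ ≤ t) :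
    π / 2 - π / 2 * t ≤ φ := by
  rcases le_total φ (π / 2) with hφ' | hφ'
  · have jordan : 1 - 2 / π * φ ≤ t := (one_sub_mul_le_cos hφ hφ').trans h
    calc
      π / 2 - π / 2 * t ≤ π / 2 - π / 2 * (1 - 2 / π * φ) := by gcongr
      _ = φ := by field_simp; ring
  · have : 0 ≤ π / 2 * t := by positivity
    linarith

/-- The constant is optimal: for `sinh h = tanh x` and `x → ∞`, the angle `φ` tends to `0` while
`h` tends to `arsinh 1`. -/
theorem stmt9_general {x h φ : ℝ} (hx : 0 < x) (hφ : 0 ≤ φ) (htanh : tanh x ≤ sinh h)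
    (hsin : sin φ * sinh x = sinh h) : π / 2 - π / 2 / arsinh 1 * h ≤ φ := by
  have harsinh : 0 < arsinh 1 := arsinh_pos_iff.2 one_pos
  have hcos_tanh : cos φ ≤ tanh x :=
    cos_le_tanh_of_one_le_sin_mul_cosh hx.le
      (one_le_mul_cosh_of_tanh_le_mul_sinh hx (htanh.trans_eq hsin.symm))
  have hh : 0 < h := by
    have htanh_pos : 0 < tanh x := by
      rw [tanh_eq_sinh_div_cosh]
      exact div_pos (sinh_pos_iff.2 hx) (cosh_pos x)
    exact sinh_pos_iff.1 (htanh_pos.trans_le htanh)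
  have hcos : cos φ ≤ h / arsinh 1 := by
    simpa only [sinh_arsinh, mul_one] using
      (le_min (hcos_tanh.trans htanh) ((cos_le_one φ).trans_eq (sinh_arsinh 1).symm)).trans
        (min_sinh_le_div_mul_sinh hh harsinh)
  calc
    π / 2 - π / 2 / arsinh 1 * h = π / 2 - π / 2 * (h / arsinh 1) := by ring
    _ ≤ φ := pi_div_two_sub_le_of_cos_le hφ (by positivity) hcos

theorem stmt9 :
    ∃ C > (0 : ℝ), ∀ ε ∈ Set.Ioc (0 : ℝ) (1 / 2), ∀ x h φ : ℝ,
      0 < x → 0 ≤ h → φ ∈ Set.Icc (0 : ℝ) (Real.pi / 2) → h ≤ ε →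
      Real.tanh x ≤ Real.sinh h → Real.sin φ * Real.sinh x = Real.sinh h →
      φ ≥ Real.pi / 2 - C * ε := by
  have hC : 0 < π / 2 / arsinh 1 := div_pos pi_div_two_pos (arsinh_pos_iff.2 one_pos)
  exact ⟨_, hC, fun _ _ _ _ _ hx _ hφ hε htanh hsin ↦
    (sub_le_sub_left (mul_le_mul_of_nonneg_left hε hC.le) _).trans
      (stmt9_general hx hφ.1 htanh hsin)⟩
end

section
/- There exists a constant C > 0 such that for all ε ∈ (0, 1/4], θ ∈ (0, π/2], ψ ∈ [π/2 − ε, π/2], and φ ∈ [0, π) satisfying tan(φ/2) = tan(θ/2) · sin ψ, one has φ ≥ (1 − C · ε) · θ. -/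
/-!
The tangent is convex on `[0, π / 2)` and vanishes at `0`, so `tan (s * x) ≤ s * tan x` for
`s ∈ [0, 1]`. With `s = sin ψ` and `x = θ / 2`, monotonicity of `tan` turns
`tan (φ / 2) = tan (θ / 2) * sin ψ` into `φ ≥ sin ψ * θ`. Since `sin ψ ≥ 1 - ε ^ 2 / 2` when `ψ` is
within `ε` of `π / 2`, the loss is in fact quadratic in `ε`.
-/

open Real Set

theorem convexOn_tan_Ico : ConvexOn ℝ (Ico 0 (π / 2)) tan := by
  have cos_pos {x : ℝ} (hx : x ∈ Ico 0 (π / 2)) : 0 < cos x :=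
    cos_pos_of_mem_Ioo ⟨by linarith [hx.1, pi_pos], hx.2⟩
  refine MonotoneOn.convexOn_of_deriv (convex_Ico 0 (π / 2))
    (continuousOn_tan.mono fun x hx ↦ (cos_pos hx).ne')
    (fun x hx ↦ (differentiableAt_tan.2
      (cos_pos (interior_subset hx)).ne').differentiableWithinAt) fun x hx y hy hxy ↦ ?_
  replace hx := interior_subset hx
  replace hy := interior_subset hy
  have cos_le_cos : cos y ≤ cos x :=
    cos_le_cos_of_nonneg_of_le_pi hx.1 (by linarith [hy.2, pi_pos]) hxy
  have cos_y_pos := cos_pos hy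
  simp only [deriv_tan]
  gcongr

theorem tan_mul_le_mul_tan {s x : ℝ} (hs : s ∈ Icc 0 1) (hx : x ∈ Ico 0 (π / 2)) :
    tan (s * x) ≤ s * tan x := by
  have zero_mem : (0 : ℝ) ∈ Ico 0 (π / 2) := ⟨le_rfl, pi_div_two_pos⟩
  simpa using convexOn_tan_Ico.2 hx zero_mem hs.1 (sub_nonneg.2 hs.2) (add_sub_cancel s 1)

theorem mul_le_of_mul_tan_le_tan {s x y : ℝ} (hs : s ≤ 1) (hx : x ∈ Ico 0 (π / 2))
    (hy : y ∈ Ico 0 (π / 2)) (h : s * tan x ≤ tan y) : s * x ≤ y := by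
  obtain hs_neg | hs_nonneg := lt_or_ge s 0
  · exact (mul_nonpos_of_nonpos_of_nonneg hs_neg.le hx.1).trans hy.1
  have sx_nonneg : 0 ≤ s * x := mul_nonneg hs_nonneg hx.1
  have sx_lt : s * x < π / 2 := (mul_le_of_le_one_left hx.1 hs).trans_lt hx.2
  refine (strictMonoOn_tan.le_iff_le ⟨?_, sx_lt⟩ ⟨?_, hy.2⟩).1
    ((tan_mul_le_mul_tan ⟨hs_nonneg, hs⟩ hx).trans h)
  · linarith [pi_pos]
  · linarith [hy.1, pi_pos]

theorem one_sub_sq_div_two_le_sin_of_abs_sub_le {ε ψ : ℝ} (hψ : |π / 2 - ψ| ≤ ε) :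
    1 - ε ^ 2 / 2 ≤ sin ψ :=
  calc 1 - ε ^ 2 / 2 ≤ 1 - (π / 2 - ψ) ^ 2 / 2 := by
        gcongr 1 - ?_ / 2
        exact sq_le_sq' (abs_le.1 hψ).1 (abs_le.1 hψ).2
    _ ≤ cos (π / 2 - ψ) := one_sub_sq_div_two_le_cos
    _ = sin ψ := cos_pi_div_two_sub ψ

theorem stmt11_general {ε θ ψ φ : ℝ} (hθ : θ ∈ Ico 0 π) (hψ : |π / 2 - ψ| ≤ ε)
    (hφ : φ ∈ Ico 0 π) (h : tan (φ / 2) = tan (θ / 2) * sin ψ) :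
    (1 - ε ^ 2 / 2) * θ ≤ φ := by
  have half_mem {x : ℝ} (hx : x ∈ Ico 0 π) : x / 2 ∈ Ico 0 (π / 2) :=
    ⟨div_nonneg hx.1 two_pos.le, div_lt_div_of_pos_right hx.2 two_pos⟩
  have sin_mul_half_le : sin ψ * (θ / 2) ≤ φ / 2 :=
    mul_le_of_mul_tan_le_tan (sin_le_one ψ) (half_mem hθ) (half_mem hφ) (by rw [h, mul_comm])
  calc (1 - ε ^ 2 / 2) * θ ≤ sin ψ * θ :=
        mul_le_mul_of_nonneg_right (one_sub_sq_div_two_le_sin_of_abs_sub_le hψ) hθ.1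
    _ ≤ φ := by linarith

theorem stmt11 :
    ∃ C > (0 : ℝ), ∀ ε ∈ Set.Ioc (0 : ℝ) (1 / 4), ∀ θ ∈ Set.Ioc (0 : ℝ) (Real.pi / 2),
      ∀ ψ ∈ Set.Icc (Real.pi / 2 - ε) (Real.pi / 2), ∀ φ ∈ Set.Ico (0 : ℝ) Real.pi,
        Real.tan (φ / 2) = Real.tan (θ / 2) * Real.sin ψ →
        φ ≥ (1 - C * ε) * θ := by
  refine ⟨1 / 8, by norm_num, fun ε ⟨hε₀, hε₁⟩ θ ⟨hθ₀, hθ₁⟩ ψ ⟨hψ₀, hψ₁⟩ φ hφ h ↦ ?_⟩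
  exact (mul_le_mul_of_nonneg_right (by nlinarith) hθ₀.le).trans <| stmt11_general (ε := ε)
    ⟨hθ₀.le, by linarith [pi_pos]⟩ (abs_le.2 ⟨by linarith, by linarith⟩) hφ h
end
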